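/- arXiv:1607.00020 — 4 statements merged into one kernel-verified Lean document; each statement's English description precedes it below -/
import Mathlib

section
/- Let A be a commutative ring which is a ℚ-algebra and T : A → A a derivation. Define, for a ∈ A and j ∈ ℤ, the element a_{(j)}b := 0 if j ≥ 0 and a_{(j)}b := (1/(−j−1)!)·T^{−j−1}(a)·b if j < 0. Then the Borcherds identity holds: for all a, b, c ∈ A and all integers m, n, k, Σ_{j≥0} C(m,j)·( (a_{(n+j)}b)_{(m+k−j)} c ) = Σ_{j≥0} (−1)^j · C(n,j) · ( a_{(m+n−j)}(b_{(k+j)} c) − (−1)^n · b_{(n+k−j)}(a_{(m+j)} c) ), where both sums have only finitely many nonzero terms. -/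
open Finset in
/-- The generalized binomial coefficient `C(x,i) = x(x−1)⋯(x−i+1)/i!`. -/
noncomputable def genBinom (x : ℚ) (i : ℕ) : ℚ :=
  (∏ t ∈ Finset.range i, (x - t)) / (i.factorial : ℚ)

/-- The `j`-th product `a_{(j)} b` of the commutative vertex algebra attached to a
commutative ℚ-algebra `A` with derivation `T`: it is `0` for `j ≥ 0` and
`(1/(−j−1)!)·T^{−j−1}(a)·b` for `j < 0`. -/
noncomputable def nProd {A : Type*} [CommRing A] [Algebra ℚ A]
    (T : Derivation ℚ A A) (a : A) (j : ℤ) (b : A) : A :=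
  if 0 ≤ j then 0
  else (((-j - 1).toNat.factorial : ℚ))⁻¹ • ((⇑T)^[(-j - 1).toNat] a) * b

/-!
Write `D_i = T ^ i / i!`, so that `a_{(j)} b = D_{-j-1}(a) b`. With `w = -m - n - k - 2`, each of
the three sums in the Borcherds identity is a combination of the monomials `D_r(a) D_{w-r}(b) c`.
On the left, the Leibniz rule and `D_i D_j = C(i+j, j) D_{i+j}` give `D_r(a) D_{w-r}(b) c` the
coefficient `∑_j C(m, j) C(r, -n-1-j)`, which is `C(m+r, -n-1)` by the Chu–Vandermonde identity.
On the right the coefficients are read off directly, and equality is the residue theorem on the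
projective line for `z ^ (m+r) * (z-1) ^ n`.
-/

open Finset in
theorem iterate_derivation_mul {R A : Type*} [CommSemiring R] [CommSemiring A] [Algebra R A]
    (D : Derivation R A A) (n : ℕ) (a b : A) :
    D^[n] (a * b) = ∑ ij ∈ antidiagonal n, n.choose ij.1 • (D^[ij.1] a * D^[ij.2] b) := by
  induction n with
  | zero => simp
  | succ n ih =>
    rw [sum_antidiagonal_choose_succ_nsmul (M := A) (fun i j ↦ D^[i] a * D^[j] b) n]
    simp only [Function.iterate_succ_apply', ih, map_sum, map_nsmul, D.leibniz, smul_eq_mul,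
      smul_add, sum_add_distrib]
    congr 1
    refine sum_congr rfl fun ⟨i, j⟩ hij ↦ ?_
    rw [n.choose_symm_of_eq_add (mem_antidiagonal.1 hij).symm, mul_comm]

theorem finsum_finsum_smul_comm {ι κ R M : Type*} [Semiring R] [AddCommMonoid M] [Module R M]
    {g : ι → κ → R} {e : κ → M} (hg : ∀ r, (g · r).HasFiniteSupport) (he : e.HasFiniteSupport) :
    ∑ᶠ j, ∑ᶠ r, g j r • e r = ∑ᶠ r, (∑ᶠ j, g j r) • e r := by
  have sum_eq (f : κ → R) : ∑ᶠ r, f r • e r = ∑ r ∈ he.toFinset, f r • e r :=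
    finsum_eq_sum_of_support_subset _
      ((Function.support_smul_subset_right f e).trans he.coe_toFinset.ge)
  rw [sum_eq fun r ↦ ∑ᶠ j, g j r]
  simp only [sum_eq, finsum_smul' (hg _)]
  exact finsum_sum_comm _ _ fun r _ ↦ (hg r).fun_comp (g := (· • e r)) (zero_smul R _)

section FinsumInt

variable {M : Type*}

theorem finsum_natCast_eq_finsum_int [AddCommMonoid M] {f : ℤ → M} (hf : ∀ i < 0, f i = 0) :
    ∑ᶠ i : ℕ, f i = ∑ᶠ i, f i := by
  rw [← finsum_mem_range Nat.cast_injective, ← finsum_mem_univ f]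
  refine finsum_mem_inter_support_eq' f _ _ fun i hi ↦ ?_
  lift i to ℕ using not_lt.1 fun h ↦ hi (hf i h)
  simp

theorem hasFiniteSupport_int_convolution [Zero M] {f : ℤ → ℤ → M}
    (hl : ∀ i < 0, ∀ j, f i j = 0) (hr : ∀ i, ∀ j < 0, f i j = 0) (n : ℤ) :
    (fun i ↦ f i (n - i)).HasFiniteSupport := by
  refine (Set.finite_Icc 0 n).subset fun i hi ↦ ⟨?_, ?_⟩
  · exact not_lt.1 fun h ↦ hi (hl _ h _)
  · exact not_lt.1 fun h ↦ hi (hr _ _ (sub_neg.2 h))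

theorem finsum_int_convolution_of_neg [AddCommMonoid M] {f : ℤ → ℤ → M}
    (hl : ∀ i < 0, ∀ j, f i j = 0) (hr : ∀ i, ∀ j < 0, f i j = 0) {n : ℤ} (hn : n < 0) :
    ∑ᶠ i, f i (n - i) = 0 :=
  finsum_eq_zero_of_forall_eq_zero fun i ↦
    (lt_or_ge i 0).elim (fun hi ↦ hl i hi _) fun hi ↦ hr i _ (by omega)

open Finset HasAntidiagonal in
theorem finsum_int_convolution_eq_sum_antidiagonal [AddCommMonoid M] {f : ℤ → ℤ → M}
    (hl : ∀ i < 0, ∀ j, f i j = 0) (hr : ∀ i, ∀ j < 0, f i j = 0) (n : ℕ) :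
    ∑ᶠ i : ℤ, f i (n - i) = ∑ ij ∈ antidiagonal n, f ij.1 ij.2 := by
  rw [← finsum_natCast_eq_finsum_int fun i hi ↦ hl i hi _,
    finsum_eq_sum_of_support_subset (s := range (n + 1)),
    Nat.sum_antidiagonal_eq_sum_range_succ_mk]
  · refine sum_congr rfl fun i hi ↦ ?_
    rw [Nat.cast_sub (mem_range_succ_iff.1 hi)]
  · intro i hi
    by_contra h
    rw [mem_coe, mem_range] at h
    exact hi (hr _ _ (by omega))

end FinsumInt

/-- The binomial coefficient `C(x, i)` of two integers, with the convention `C(x, i) = 0` for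
`i < 0`. It lets the sums of the Borcherds identity be indexed by all of `ℤ`. -/
def intChoose (x : ℤ) : ℤ → ℤ
  | .ofNat i => Ring.choose x i
  | .negSucc _ => 0

theorem intChoose_of_neg (x : ℤ) {i : ℤ} (hi : i < 0) : intChoose x i = 0 := by
  obtain ⟨i, rfl⟩ := Int.eq_negSucc_of_lt_zero hi
  rfl

theorem intChoose_natCast (x i : ℕ) : intChoose x i = x.choose i :=
  Ring.choose_natCast x i

theorem intChoose_eq_negOnePow_mul (x i : ℤ) :
    intChoose x i = i.negOnePow * intChoose (i - x - 1) i := by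
  cases i with
  | ofNat i =>
    have upper_eq : (i : ℤ) - x - 1 = -x + i - 1 := by ring
    rw [Int.ofNat_eq_natCast, upper_eq]
    simpa only [neg_neg] using! Ring.choose_neg (-x) i
  | negSucc i => exact (mul_zero _).symm

theorem intChoose_symm_of_eq_add {x i j : ℤ} (hx : 0 ≤ x) (h : x = i + j) :
    intChoose x i = intChoose x j := by
  wlog hij : i ≤ j generalizing i j
  · exact (this (h.trans (add_comm i j)) (le_of_not_ge hij)).symm
  lift x to ℕ using hx
  lift j to ℕ using by omega
  rcases lt_or_ge i 0 with hi | hi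
  · rw [intChoose_of_neg _ hi, intChoose_natCast, Nat.choose_eq_zero_of_lt (by omega),
      Nat.cast_zero]
  · lift i to ℕ using hi
    rw [intChoose_natCast, intChoose_natCast, Nat.choose_symm_of_eq_add (mod_cast h)]

theorem hasFiniteSupport_intChoose_mul_intChoose (x y i : ℤ) :
    (fun j ↦ intChoose x j * intChoose y (i - j)).HasFiniteSupport :=
  hasFiniteSupport_int_convolution (f := fun j l ↦ intChoose x j * intChoose y l)
    (fun j hj _ ↦ by simp [intChoose_of_neg x hj])
    (fun _ l hl ↦ by simp [intChoose_of_neg y hl]) i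

theorem finsum_intChoose_mul_intChoose (x y i : ℤ) :
    ∑ᶠ j, intChoose x j * intChoose y (i - j) = intChoose (x + y) i := by
  let f (j l : ℤ) : ℤ := intChoose x j * intChoose y l
  have hl : ∀ j < 0, ∀ l, f j l = 0 := fun j hj l ↦ by simp [f, intChoose_of_neg x hj]
  have hr : ∀ j, ∀ l < 0, f j l = 0 := fun j l hl ↦ by simp [f, intChoose_of_neg y hl]
  rcases lt_or_ge i 0 with hi | hi
  · exact (finsum_int_convolution_of_neg hl hr hi).trans (intChoose_of_neg _ hi).symm
  · lift i to ℕ using hi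
    exact (finsum_int_convolution_eq_sum_antidiagonal hl hr i).trans
      (Ring.add_choose_eq i (Commute.all x y)).symm

/-- The sum of the residues of `z ^ x * (z - 1) ^ n` at `0`, `1` and `∞` vanishes. -/
theorem intChoose_neg_sub_one (x n : ℤ) :
    intChoose x (-n - 1)
      = intChoose x (x + n + 1) - n.negOnePow * intChoose (-x - n - 2) (-x - 1) := by
  rcases le_or_gt 0 x with hx | hx
  · rw [intChoose_of_neg _ (show -x - 1 < 0 by omega), mul_zero, sub_zero]
    exact intChoose_symm_of_eq_add hx (by ring)
  rcases lt_or_ge (x + n + 1) 0 with hxn | hxn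
  · have reflect : intChoose x (-n - 1)
        = (-n - 1).negOnePow * intChoose (-x - n - 2) (-n - 1) := by
      convert! intChoose_eq_negOnePow_mul x (-n - 1) using 3
      ring
    have symm : intChoose (-x - n - 2) (-n - 1) = intChoose (-x - n - 2) (-x - 1) :=
      intChoose_symm_of_eq_add (by omega) (by ring)
    have sign : (-n - 1).negOnePow = -n.negOnePow := by
      simp [Int.negOnePow_sub]
    rw [reflect, symm, sign, intChoose_of_neg _ hxn]
    push_cast
    ring
  · have reflect_left : intChoose x (x + n + 1)
        = (x + n + 1).negOnePow * intChoose n (x + n + 1) := by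
      convert! intChoose_eq_negOnePow_mul x (x + n + 1) using 3
      ring
    have reflect_right : intChoose (-x - n - 2) (-x - 1)
        = (-x - 1).negOnePow * intChoose n (-x - 1) := by
      convert! intChoose_eq_negOnePow_mul (-x - n - 2) (-x - 1) using 3
      ring
    have symm : intChoose n (x + n + 1) = intChoose n (-x - 1) :=
      intChoose_symm_of_eq_add (by omega) (by ring)
    have sign : (x + n + 1).negOnePow = n.negOnePow * (-x - 1).negOnePow := by
      rw [← Int.negOnePow_add, Int.negOnePow_eq_iff]
      exact ⟨x + 1, by ring⟩
    rw [reflect_left, reflect_right, symm, sign, intChoose_of_neg _ (by omega)]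
    push_cast
    ring

theorem genBinom_eq_choose (x : ℚ) (i : ℕ) : genBinom x i = Ring.choose x i := by
  rw [genBinom, Ring.choose_eq_smul, smul_eq_mul, ← div_eq_inv_mul, ← Polynomial.aeval_eq_smeval,
    Polynomial.aeval_def, Polynomial.eval₂_eq_eval_map, descPochhammer_map,
    descPochhammer_eval_eq_prod_range]

theorem genBinom_intCast (x : ℤ) (i : ℕ) : genBinom x i = intChoose x i := by
  rw [genBinom_eq_choose]
  exact (Ring.map_choose (Int.castRingHom ℚ) x i).symm

theorem neg_one_pow_mul_genBinom_intCast (x : ℤ) (i : ℕ) :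
    (-1) ^ i * genBinom x i = intChoose (i - x - 1) i := by
  have reflect : intChoose (i - x - 1) i = (-1) ^ i * intChoose x i := by
    rw [← Int.coe_negOnePow_natCast]
    convert! intChoose_eq_negOnePow_mul (i - x - 1) i using 3
    ring
  rw [genBinom_intCast, reflect]
  push_cast
  rfl

section Derivation

variable {A : Type*} [CommRing A] [Algebra ℚ A] (T : Derivation ℚ A A)

/-- The divided power `T ^ i / i!` of a derivation, with the convention that it is `0` for
`i < 0`. -/
noncomputable def dividedPower : ℤ → A →ₗ[ℚ] A
  | .ofNat i => (i.factorial : ℚ)⁻¹ • (T : A →ₗ[ℚ] A) ^ i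
  | .negSucc _ => 0

theorem dividedPower_natCast_apply (i : ℕ) (a : A) :
    dividedPower T i a = (i.factorial : ℚ)⁻¹ • T^[i] a := by
  change (i.factorial : ℚ)⁻¹ • ((T : A →ₗ[ℚ] A) ^ i) a = _
  rw [Module.End.pow_apply]
  rfl

theorem dividedPower_of_neg {i : ℤ} (hi : i < 0) : dividedPower T i = 0 := by
  obtain ⟨i, rfl⟩ := Int.eq_negSucc_of_lt_zero hi
  rfl

theorem hasFiniteSupport_dividedPower_mul_dividedPower (n : ℤ) (a b : A) :
    (fun i ↦ dividedPower T i a * dividedPower T (n - i) b).HasFiniteSupport :=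
  hasFiniteSupport_int_convolution (f := fun i j ↦ dividedPower T i a * dividedPower T j b)
    (fun i hi _ ↦ by simp [dividedPower_of_neg T hi])
    (fun _ j hj ↦ by simp [dividedPower_of_neg T hj]) n

open Finset in
theorem dividedPower_mul (n : ℤ) (a b : A) :
    dividedPower T n (a * b) = ∑ᶠ i, dividedPower T i a * dividedPower T (n - i) b := by
  let f (i j : ℤ) : A := dividedPower T i a * dividedPower T j b
  have hl : ∀ i < 0, ∀ j, f i j = 0 := fun i hi j ↦ by simp [f, dividedPower_of_neg T hi]
  have hr : ∀ i, ∀ j < 0, f i j = 0 := fun i j hj ↦ by simp [f, dividedPower_of_neg T hj]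
  rcases lt_or_ge n 0 with hn | hn
  · rw [dividedPower_of_neg T hn]
    exact (finsum_int_convolution_of_neg hl hr hn).symm
  lift n to ℕ using hn
  rw [finsum_int_convolution_eq_sum_antidiagonal hl hr n, dividedPower_natCast_apply,
    iterate_derivation_mul, smul_sum]
  refine sum_congr rfl fun ⟨i, j⟩ hij ↦ ?_
  obtain rfl := HasAntidiagonal.mem_antidiagonal.1 hij
  simp only [f]
  rw [dividedPower_natCast_apply, dividedPower_natCast_apply, smul_mul_smul_comm,
    ← Nat.cast_smul_eq_nsmul ℚ, smul_smul, Nat.cast_add_choose]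
  congr 1
  field_simp

theorem dividedPower_dividedPower (i j : ℤ) (a : A) :
    dividedPower T i (dividedPower T j a) = intChoose (i + j) j • dividedPower T (i + j) a := by
  rcases lt_or_ge j 0 with hj | hj
  · simp [dividedPower_of_neg T hj, intChoose_of_neg _ hj]
  rcases lt_or_ge i 0 with hi | hi
  · rcases lt_or_ge (i + j) 0 with hij | hij
    · simp [dividedPower_of_neg T hi, dividedPower_of_neg T hij]
    · rw [intChoose_symm_of_eq_add hij (add_comm i j), intChoose_of_neg _ hi]
      simp [dividedPower_of_neg T hi]
  lift i to ℕ using hi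
  lift j to ℕ using hj
  rw [← Nat.cast_add, dividedPower_natCast_apply T j, map_smul, dividedPower_natCast_apply,
    dividedPower_natCast_apply, intChoose_natCast, ← Int.cast_smul_eq_zsmul ℚ, Int.cast_natCast,
    ← Nat.choose_symm_add, Nat.cast_add_choose, Function.iterate_add_apply, smul_smul, smul_smul]
  congr 1
  field_simp

theorem nProd_eq_dividedPower_mul (a : A) (j : ℤ) (b : A) :
    nProd T a j b = dividedPower T (-j - 1) a * b := by
  unfold nProd
  split_ifs with hj
  · rw [dividedPower_of_neg T (by omega), LinearMap.zero_apply, zero_mul]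
  · obtain ⟨i, hi⟩ := Int.eq_ofNat_of_zero_le (show 0 ≤ -j - 1 by omega)
    rw [hi, dividedPower_natCast_apply, Int.toNat_natCast]

/-- The monomial `T⁽ʳ⁾a · T⁽ʷ⁻ʳ⁾b · c` in divided powers of `T`, of total order `w`. -/
noncomputable def dividedPowerMonomial (a b c : A) (w r : ℤ) : A :=
  dividedPower T r a * dividedPower T (w - r) b * c

variable (a b c : A)

theorem hasFiniteSupport_dividedPowerMonomial (w : ℤ) :
    (dividedPowerMonomial T a b c w).HasFiniteSupport :=
  (hasFiniteSupport_dividedPower_mul_dividedPower T w a b).fun_mul_left _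

theorem nProd_nProd (p q : ℤ) :
    nProd T a p (nProd T b q c) = dividedPowerMonomial T a b c (-p - q - 2) (-p - 1) := by
  rw [nProd_eq_dividedPower_mul, nProd_eq_dividedPower_mul, ← mul_assoc, dividedPowerMonomial]
  congr 4
  ring

theorem nProd_left_comm (p q : ℤ) :
    nProd T a p (nProd T b q c) = nProd T b q (nProd T a p c) := by
  simp only [nProd_eq_dividedPower_mul]
  exact mul_left_comm ..

theorem nProd_nProd_left (p q : ℤ) :
    nProd T (nProd T a p b) q c
      = ∑ᶠ r, intChoose r (-p - 1) • dividedPowerMonomial T a b c (-p - q - 2) r := by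
  rw [nProd_eq_dividedPower_mul, nProd_eq_dividedPower_mul, dividedPower_mul,
    finsum_mul' _ _ (hasFiniteSupport_dividedPower_mul_dividedPower ..),
    ← finsum_comp_equiv (Equiv.addRight (-p - 1)) (f := fun r ↦ intChoose r _ • _)]
  refine finsum_congr fun i ↦ ?_
  have order_eq : -q - 1 - i = -p - q - 2 - (i + (-p - 1)) := by ring
  rw [dividedPower_dividedPower, smul_mul_assoc, smul_mul_assoc, order_eq]
  rfl

theorem hasFiniteSupport_nProd_add_natCast (n : ℤ) :
    (fun j : ℕ ↦ nProd T a (n + j) b).HasFiniteSupport :=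
  (Set.finite_Iio (-n).toNat).subset fun _ hj ↦
    Set.mem_Iio.2 <| not_le.1 fun h ↦ hj <| if_pos (by omega)

theorem hasFiniteSupport_nProd_nProd_left (n : ℤ) (p : ℕ → ℤ) :
    (fun j : ℕ ↦ nProd T (nProd T a (n + j) b) (p j) c).HasFiniteSupport :=
  (hasFiniteSupport_nProd_add_natCast T a b n).subset fun j ↦ mt fun h ↦ by
    simp only [h, nProd_eq_dividedPower_mul, map_zero, zero_mul]

theorem hasFiniteSupport_nProd_nProd_right (n : ℤ) (p : ℕ → ℤ) :
    (fun j : ℕ ↦ nProd T a (p j) (nProd T b (n + j) c)).HasFiniteSupport :=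
  (hasFiniteSupport_nProd_add_natCast T b c n).subset fun j ↦ mt fun h ↦ by
    simp only [h, nProd_eq_dividedPower_mul T a, mul_zero]

theorem finsum_genBinom_smul_nProd_nProd_left (m n k : ℤ) :
    ∑ᶠ j : ℕ, genBinom m j • nProd T (nProd T a (n + j) b) (m + k - j) c
      = ∑ᶠ r, intChoose (m + r) (-n - 1) • dividedPowerMonomial T a b c (-m - n - k - 2) r := by
  let e := dividedPowerMonomial T a b c (-m - n - k - 2)
  have he : e.HasFiniteSupport := hasFiniteSupport_dividedPowerMonomial ..
  have term_eq (j : ℤ) : nProd T (nProd T a (n + j) b) (m + k - j) c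
      = ∑ᶠ r, intChoose r (-n - 1 - j) • e r := by
    rw [nProd_nProd_left]
    simp only [e]
    ring_nf
  calc ∑ᶠ j : ℕ, genBinom m j • nProd T (nProd T a (n + j) b) (m + k - j) c
    _ = ∑ᶠ j : ℕ, intChoose m j • ∑ᶠ r, intChoose r (-n - 1 - j) • e r := by
      simp only [genBinom_intCast, Int.cast_smul_eq_zsmul, term_eq]
    _ = ∑ᶠ j : ℤ, intChoose m j • ∑ᶠ r, intChoose r (-n - 1 - j) • e r :=
      finsum_natCast_eq_finsum_int
        (f := fun j ↦ intChoose m j • ∑ᶠ r, intChoose r (-n - 1 - j) • e r)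
        fun j hj ↦ by rw [intChoose_of_neg m hj, zero_smul]
    _ = ∑ᶠ j : ℤ, ∑ᶠ r, (intChoose m j * intChoose r (-n - 1 - j)) • e r := by
      simp only [smul_finsum' _ (he.fun_smul_right _), smul_smul]
    _ = ∑ᶠ r, (∑ᶠ j, intChoose m j * intChoose r (-n - 1 - j)) • e r :=
      finsum_finsum_smul_comm (fun r ↦ hasFiniteSupport_intChoose_mul_intChoose m r (-n - 1)) he
    _ = ∑ᶠ r, intChoose (m + r) (-n - 1) • e r := by
      simp only [finsum_intChoose_mul_intChoose]

theorem finsum_genBinom_smul_nProd_nProd (m n k : ℤ) :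
    ∑ᶠ j : ℕ, ((-1) ^ j * genBinom n j) • nProd T a (m + n - j) (nProd T b (k + j) c)
      = ∑ᶠ r, intChoose (m + r) (m + r + n + 1) •
          dividedPowerMonomial T a b c (-m - n - k - 2) r := by
  simp only [neg_one_pow_mul_genBinom_intCast, Int.cast_smul_eq_zsmul, nProd_nProd]
  rw [← finsum_comp_equiv (Equiv.subRight (m + n + 1)), ← finsum_natCast_eq_finsum_int]
  · refine finsum_congr fun j ↦ ?_
    simp only [Equiv.subRight_apply]
    ring_nf
  · intro i hi
    rw [intChoose_of_neg _ (by rw [Equiv.subRight_apply]; omega), zero_smul]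

theorem finsum_genBinom_smul_nProd_nProd_swap (m n k : ℤ) :
    ∑ᶠ j : ℕ, ((-1) ^ j * genBinom n j) • nProd T b (n + k - j) (nProd T a (m + j) c)
      = ∑ᶠ r, intChoose (-(m + r) - n - 2) (-(m + r) - 1) •
          dividedPowerMonomial T a b c (-m - n - k - 2) r := by
  simp only [neg_one_pow_mul_genBinom_intCast, Int.cast_smul_eq_zsmul, nProd_left_comm T b a,
    nProd_nProd]
  rw [← finsum_comp_equiv (Equiv.subLeft (-m - 1)), ← finsum_natCast_eq_finsum_int]
  · refine finsum_congr fun j ↦ ?_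
    simp only [Equiv.subLeft_apply]
    ring_nf
  · intro i hi
    rw [intChoose_of_neg _ (by rw [Equiv.subLeft_apply]; omega), zero_smul]

end Derivation

/-- a commutative ℚ-algebra with a derivation, equipped with the
products `a_{(j)}b` above, satisfies the Borcherds identity; both sums have
finitely many nonzero terms. -/
theorem commutative_vertex_algebra_borcherds_identity
    (A : Type*) [CommRing A] [Algebra ℚ A] (T : Derivation ℚ A A)
    (a b c : A) (m n k : ℤ) :
    (Set.Finite (Function.support fun j : ℕ =>
      genBinom (m : ℚ) j • nProd T (nProd T a (n + j) b) (m + k - j) c)) ∧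
    (Set.Finite (Function.support fun j : ℕ =>
      ((-1 : ℚ) ^ j * genBinom (n : ℚ) j) •
        (nProd T a (m + n - j) (nProd T b (k + j) c)
          - (-1 : ℚ) ^ n • nProd T b (n + k - j) (nProd T a (m + j) c)))) ∧
    (∑ᶠ j : ℕ, genBinom (m : ℚ) j • nProd T (nProd T a (n + j) b) (m + k - j) c)
      = ∑ᶠ j : ℕ, ((-1 : ℚ) ^ j * genBinom (n : ℚ) j) •
          (nProd T a (m + n - j) (nProd T b (k + j) c)
            - (-1 : ℚ) ^ n • nProd T b (n + k - j) (nProd T a (m + j) c)) := by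
  have hfin := hasFiniteSupport_dividedPowerMonomial T a b c (-m - n - k - 2)
  have hright := (hasFiniteSupport_nProd_nProd_right T a b c k (m + n - ·)).fun_smul_right
    fun j ↦ (-1) ^ j * genBinom n j
  have hswap := (hasFiniteSupport_nProd_nProd_right T b a c m (n + k - ·)).fun_smul_right
    fun j ↦ (-1) ^ j * genBinom n j
  simp only [smul_sub, smul_comm _ ((-1 : ℚ) ^ n)]
  refine ⟨(hasFiniteSupport_nProd_nProd_left T a b c n (m + k - ·)).fun_smul_right _,
    hright.sub (hswap.fun_smul_right _), ?_⟩
  rw [finsum_sub_distrib hright (hswap.fun_smul_right _), ← smul_finsum' _ hswap,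
    finsum_genBinom_smul_nProd_nProd_left, finsum_genBinom_smul_nProd_nProd,
    finsum_genBinom_smul_nProd_nProd_swap, smul_finsum' _ (hfin.fun_smul_right _),
    ← finsum_sub_distrib (hfin.fun_smul_right _) ((hfin.fun_smul_right _).fun_smul_right _)]
  refine finsum_congr fun r ↦ ?_
  rw [intChoose_neg_sub_one, sub_smul, mul_smul, ← Int.cast_smul_eq_zsmul ℚ (n.negOnePow : ℤ),
    Int.cast_negOnePow]
end

section
/- With notation as in the context, for every p ∈ R_k and every e ∈ ℤ, the coefficient of s^e in Φ(T(p)) equals ((e+m)/m) times the coefficient of s^{e+m} in Φ(p). (Equivalently, Φ ∘ T = ∂_z ∘ Φ, where ∂_z is the formal derivative in z = s^m acting on Laurent series in s by ∂_z(s^e) = (e/m)·s^{e−m}.) -/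
open MvPolynomial

/-- Index set for the coordinate ring `B_α = ℂ[J^g 𝔸^k]` of the twisted jet
scheme: pairs `(i,e)` with `e ≡ α_i (mod m)`. -/
abbrev TwIdx (k m : ℕ) (α : Fin k → ℕ) : Type := {q : Fin k × ℕ // q.2 % m = α q.1}

/-
Both `Φ ∘ T` and `∂_z ∘ Φ` are derivations along `Φ`, so they agree as soon as they agree on the
generators `x_{i,ℓ}`. The Leibniz rule for `d/ds`, hence for `∂_z = (1/m) s^(1-m) d/ds`, comes from
the grading operator `s d/ds`, which multiplies the coefficient of `s^e` by `e`. On generators the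
claim is a recursion in `ℓ` for the coefficients of the divided power `∂_z^ℓ / ℓ!`.
-/

-- `M` is kept apart from `A` because for `A = M = LaurentSeries B` the scalar action found on `M`
-- is the coefficientwise one, which is not definitionally that of the algebra structure on `A`.
theorem map_derivation_eq_of_X {σ R A M N : Type*} [CommRing R] [CommRing A]
    [Algebra R A] [AddCommMonoid M] [Module R M] [Module A M]
    [AddCommMonoid N] [Module R N] [Module (MvPolynomial σ R) N]
    (φ : MvPolynomial σ R →ₐ[R] A) (ψ : N →ₛₗ[(φ : MvPolynomial σ R →+* A)] M)
    (T : Derivation R (MvPolynomial σ R) N) (D : Derivation R A M)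
    (hX : ∀ i, ψ (T (X i)) = D (φ (X i))) (p : MvPolynomial σ R) :
    ψ (T p) = D (φ p) := by
  induction p using MvPolynomial.induction_on with
  | C a =>
    rw [← MvPolynomial.algebraMap_eq, φ.commutes, T.map_algebraMap, D.map_algebraMap, map_zero]
  | add p q hp hq => simp only [map_add, hp, hq]
  | mul_X p i hp =>
    simp only [Derivation.leibniz, map_add, map_mul, map_smulₛₗ, RingHom.coe_coe, hp, hX]

theorem coeff_mul_add_mul_of_coeff_eq_zsmul {B : Type*} [CommRing B] {f g f' g' : LaurentSeries B}
    (hf : ∀ e, f'.coeff e = e • f.coeff e) (hg : ∀ e, g'.coeff e = e • g.coeff e) (e : ℤ) :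
    (f * g' + g * f').coeff e = e • (f * g).coeff e := by
  have hf_supp : f'.support ⊆ f.support := fun x hx hfx ↦ hx (by rw [hf, hfx, smul_zero])
  have hg_supp : g'.support ⊆ g.support := fun x hx hgx ↦ hx (by rw [hg, hgx, smul_zero])
  rw [mul_comm g f', HahnSeries.coeff_add, HahnSeries.coeff_mul_left' f.isPWO_support hf_supp,
    HahnSeries.coeff_mul_right' g.isPWO_support hg_supp, HahnSeries.coeff_mul,
    ← Finset.sum_add_distrib, Finset.smul_sum]
  refine Finset.sum_congr rfl fun ⟨i, j⟩ hij ↦ ?_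
  obtain ⟨-, -, rfl⟩ := Finset.mem_antidiagonal.mp hij
  rw [hf, hg, mul_smul_comm, smul_mul_assoc, ← add_smul, add_comm j i]

section Derivative

variable (R : Type*) {B : Type*} [Semiring R] [CommRing B] [Module R B]

theorem coeff_laurentSeries_derivative (f : LaurentSeries B) (e : ℤ) :
    (LaurentSeries.derivative R f).coeff e = (e + 1) • f.coeff (e + 1) := by
  rw [LaurentSeries.derivative_apply, LaurentSeries.hasseDeriv_coeff, Nat.cast_one,
    Ring.choose_one_right]

theorem coeff_single_one_mul_derivative (f : LaurentSeries B) (e : ℤ) :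
    (HahnSeries.single 1 1 * LaurentSeries.derivative R f).coeff e = e • f.coeff e := by
  rw [HahnSeries.coeff_single_mul, one_mul, coeff_laurentSeries_derivative, sub_add_cancel]

theorem laurentSeries_derivative_mul (f g : LaurentSeries B) :
    LaurentSeries.derivative R (f * g) =
      f * LaurentSeries.derivative R g + g * LaurentSeries.derivative R f := by
  ext e
  have h := coeff_mul_add_mul_of_coeff_eq_zsmul (coeff_single_one_mul_derivative R f)
    (coeff_single_one_mul_derivative R g) (e + 1)
  rw [mul_left_comm f, mul_left_comm g, ← mul_add, HahnSeries.coeff_single_mul_add, one_mul] at h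
  rw [h, coeff_laurentSeries_derivative]

theorem laurentSeries_derivative_one : LaurentSeries.derivative R (1 : LaurentSeries B) = 0 := by
  have h := laurentSeries_derivative_mul R (1 : LaurentSeries B) 1
  rwa [one_mul, one_mul, left_eq_add] at h

end Derivative

section PowDerivation

variable {K B : Type*} [CommRing K] [CommRing B] [Algebra K B]

theorem algebraMap_mul_eq_smul (c : K) (f : LaurentSeries B) :
    algebraMap K (LaurentSeries B) c * f = c • f := by
  ext e
  rw [HahnSeries.algebraMap_apply', PowerSeries.algebraMap_apply, HahnSeries.ofPowerSeries_C,
    HahnSeries.C_mul_eq_smul, HahnSeries.coeff_smul, algebraMap_smul, HahnSeries.coeff_smul]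

variable (B) in
/-- The derivation `c s^(1-m) d/ds` of Laurent series in `s`. For `c = 1/m` it is the
derivative `d/dz` with respect to `z = s^m`. -/
noncomputable def powDerivation (c : K) (m : ℤ) :
    Derivation K (LaurentSeries B) (LaurentSeries B) where
  toFun f := HahnSeries.single (1 - m) (algebraMap K B c) * LaurentSeries.derivative K f
  map_add' f g := by rw [map_add, mul_add]
  map_smul' a f := by
    rw [Algebra.smul_def, algebraMap_mul_eq_smul, map_smul, RingHom.id_apply,
      ← algebraMap_mul_eq_smul, ← algebraMap_mul_eq_smul, mul_left_comm]
  map_one_eq_zero' := by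
    change _ * LaurentSeries.derivative K (1 : LaurentSeries B) = 0
    rw [laurentSeries_derivative_one, mul_zero]
  leibniz' f g := by
    change _ * LaurentSeries.derivative K (f * g) = f * (_ * _) + g * (_ * _)
    rw [laurentSeries_derivative_mul, mul_add, mul_left_comm f, mul_left_comm g]

theorem coeff_powDerivation (c : K) (m : ℤ) (f : LaurentSeries B) (e : ℤ) :
    (powDerivation B c m f).coeff e = (c * (e + m)) • f.coeff (e + m) := by
  change (HahnSeries.single (1 - m) (algebraMap K B c) * LaurentSeries.derivative K f).coeff e = _
  rw [HahnSeries.coeff_single_mul, coeff_laurentSeries_derivative,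
    show e - (1 - m) + 1 = e + m by ring, ← Algebra.smul_def, ← Int.cast_smul_eq_zsmul K,
    smul_smul, Int.cast_add]

end PowDerivation

/-- The coefficient of `s^e` in `(D^ℓ / ℓ!) s^(e + ℓ m)`, where `D = c s^(1-m) d/ds`. -/
def dividedPowCoeff {K : Type*} [Field K] (c : K) (m : ℤ) (ℓ : ℕ) (e : ℤ) : K :=
  (ℓ.factorial : K)⁻¹ * ∏ j ∈ Finset.range ℓ, c * (e + (j + 1) * m)

theorem succ_mul_dividedPowCoeff_succ {K : Type*} [Field K] [CharZero K] (c : K) (m : ℤ)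
    (ℓ : ℕ) (e : ℤ) :
    (ℓ + 1) * dividedPowCoeff c m (ℓ + 1) e = c * (e + m) * dividedPowCoeff c m ℓ (e + m) := by
  have hprod : ∏ j ∈ Finset.range (ℓ + 1), c * ((e : K) + (j + 1) * m) =
      (∏ j ∈ Finset.range ℓ, c * (((e + m : ℤ) : K) + (j + 1) * m)) * (c * (e + m)) := by
    rw [Finset.prod_range_succ']
    push_cast
    congr! 3 <;> ring
  have hℓ : (ℓ : K) + 1 ≠ 0 := Nat.cast_add_one_ne_zero ℓ
  rw [dividedPowCoeff, dividedPowCoeff, hprod, Nat.factorial_succ, Nat.cast_mul, Nat.cast_succ,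
    mul_inv, mul_assoc, mul_inv_cancel_left₀ hℓ]
  ring

theorem twisted_field_translation_general {ι K B : Type*} [Field K] [CharZero K]
    [CommRing B] [Algebra K B] (c : K) (m : ℤ) (y : ι → ℤ → B)
    (T : Derivation K (MvPolynomial (ι × ℕ) K) (MvPolynomial (ι × ℕ) K))
    (hT : ∀ i ℓ, T (X (i, ℓ)) = ((ℓ : K) + 1) • X (i, ℓ + 1))
    (Φ : MvPolynomial (ι × ℕ) K →ₐ[K] LaurentSeries B)
    (hΦ : ∀ i ℓ e, (Φ (X (i, ℓ))).coeff e = dividedPowCoeff c m ℓ e • y i (e + ℓ * m))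
    (p : MvPolynomial (ι × ℕ) K) (e : ℤ) :
    (Φ (T p)).coeff e = (c * (e + m)) • (Φ p).coeff (e + m) := by
  have hX : ∀ q, Φ (T (X q)) = powDerivation B c m (Φ (X q)) := by
    rintro ⟨i, ℓ⟩
    ext e
    have hindex : e + (ℓ + 1 : ℕ) * m = e + m + ℓ * m := by push_cast; ring
    calc (Φ (T (X (i, ℓ)))).coeff e
        = ((ℓ : K) + 1) • (Φ (X (i, ℓ + 1))).coeff e := by
          rw [hT, Algebra.smul_def, map_mul, Φ.commutes, algebraMap_mul_eq_smul,
            HahnSeries.coeff_smul]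
      _ = (c * (e + m)) • (Φ (X (i, ℓ))).coeff (e + m) := by
          rw [hΦ, hΦ, smul_smul, smul_smul, succ_mul_dividedPowCoeff_succ, hindex]
      _ = (powDerivation B c m (Φ (X (i, ℓ)))).coeff e := (coeff_powDerivation ..).symm
  have hp : Φ (T p) = powDerivation B c m (Φ p) :=
    map_derivation_eq_of_X Φ (Φ : MvPolynomial (ι × ℕ) K →+* LaurentSeries B).toSemilinearMap
      T (powDerivation B c m) hX p
  rw [hp, coeff_powDerivation]

/-- the twisted fields intertwine the translation operator `T` with
the formal derivative `∂_z` in `z = s^m`: for every `p ∈ R_k` and `e ∈ ℤ`, the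
coefficient of `s^e` in `Φ(T(p))` equals `((e+m)/m)` times the coefficient of
`s^{e+m}` in `Φ(p)`. -/
theorem twisted_field_translation
    (k m : ℕ) (hk : 1 ≤ k) (hm : 1 ≤ m)
    (α : Fin k → ℕ) (hα : ∀ i, α i < m)
    (T : Derivation ℂ (MvPolynomial (Fin k × ℕ) ℂ) (MvPolynomial (Fin k × ℕ) ℂ))
    (hT : ∀ (i : Fin k) (ℓ : ℕ),
      T (X (i, ℓ)) = ((ℓ : ℂ) + 1) • X (i, ℓ + 1))
    (Φ : MvPolynomial (Fin k × ℕ) ℂ →ₐ[ℂ] LaurentSeries (MvPolynomial (TwIdx k m α) ℂ))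
    (hΦ : ∀ (i : Fin k) (ℓ : ℕ) (e : ℤ),
      (Φ (X (i, ℓ))).coeff e =
        if h : 0 ≤ e + ℓ * m ∧ (e + ℓ * m).toNat % m = α i then
          (((ℓ.factorial : ℂ))⁻¹ *
            ∏ j ∈ Finset.range ℓ, (((e : ℂ) + (j + 1) * m) / m)) •
            X (⟨(i, (e + ℓ * m).toNat), h.2⟩ : TwIdx k m α)
        else 0) :
    ∀ (p : MvPolynomial (Fin k × ℕ) ℂ) (e : ℤ),
      (Φ (T p)).coeff e = (((e : ℂ) + m) / m) • (Φ p).coeff (e + m) := by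
  simpa [div_eq_inv_mul] using twisted_field_translation_general (m : ℂ)⁻¹ m
    (fun i n ↦ if h : 0 ≤ n ∧ n.toNat % m = α i then X ⟨(i, n.toNat), h.2⟩ else 0) T hT Φ
    fun i ℓ e ↦ by simp [hΦ, dividedPowCoeff, div_eq_inv_mul, smul_dite]
end

section
/- With notation as in the context, for every p ∈ I_∞ and every e ∈ ℤ, the coefficient of s^e in Φ(p) lies in the ideal J ⊆ B_α. Consequently Φ descends to a ℂ-algebra homomorphism A_∞ = R_k/I_∞ → (B_α/J)((s)), i.e. the twisted fields are well defined on the quotients ℂ[JZ] and ℂ[J^g Z]. -/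
open MvPolynomial

/-!
Each twisted field satisfies `(ℓ + 1) Φ(x_{i,ℓ+1}) = D Φ(x_{i,ℓ})` for the vector field
`D = (1/m) s^{1-m} d/ds`, because its coefficients are the binomials `binom(e/m + ℓ, ℓ)`.
Hence `Φ` intertwines `T` and `D` on the generators of `R_k`, and so everywhere.
The Laurent series with all coefficients in `J` form an ideal stable under `D`; it contains
every `Φ(ι(P_j))`, so it contains every `Φ(Tⁿ(ι(P_j))) = Dⁿ(Φ(ι(P_j)))`.
-/

lemma span_iterate_le_comap {R A κ : Type*} [CommSemiring R] [CommSemiring A]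
    {T : R → R} {D : A → A} {Φ : R →+* A} (hΦ : Function.Semiconj Φ T D)
    {N : Ideal A} (hN : Set.MapsTo D N N) {f : κ → R} (hf : ∀ j, Φ (f j) ∈ N) :
    Ideal.span {q | ∃ (j : κ) (n : ℕ), q = T^[n] (f j)} ≤ N.comap Φ := by
  rw [Ideal.span_le]
  rintro _ ⟨j, n, rfl⟩
  change Φ (T^[n] (f j)) ∈ N
  rw [hΦ.iterate_right n (f j)]
  exact hN.iterate n (hf j)

/-- The `K`-derivation given by an additive endomorphism of `A` that satisfies the Leibniz rule and
kills the scalars. -/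
def derivationOfLeibniz {K A : Type*} [CommSemiring K] [CommRing A] [Algebra K A] (D : A →+ A)
    (leibniz : ∀ a b, D (a * b) = a * D b + b * D a) (scalar : ∀ c, D (algebraMap K A c) = 0) :
    Derivation K A A :=
  Derivation.mk'
    { D with
      map_smul' := fun c a => by
        change D (c • a) = c • D a
        rw [Algebra.smul_def, leibniz, scalar, mul_zero, add_zero, Algebra.smul_def] }
    leibniz

lemma semiconj_derivation_of_X {K τ A : Type*} [CommSemiring K] [CommSemiring A] [Algebra K A]
    {T : Derivation K (MvPolynomial τ K) (MvPolynomial τ K)} {D : Derivation K A A}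
    {Φ : MvPolynomial τ K →ₐ[K] A} (hX : ∀ t, Φ (T (X t)) = D (Φ (X t))) :
    Function.Semiconj Φ T D := by
  intro p
  induction p using MvPolynomial.induction_on with
  | C a =>
    rw [← algebraMap_eq, T.map_algebraMap, Φ.commutes, D.map_algebraMap, map_zero]
  | add p q hp hq => simp only [map_add, hp, hq]
  | mul_X p t hp => simp only [Derivation.leibniz, smul_eq_mul, map_add, map_mul, hp, hX]

section LaurentSeries

variable {K B : Type*} [CommRing K] [CommRing B] [Algebra K B]

lemma laurentSeries_algebraMap_eq_C (a : K) :
    algebraMap K (LaurentSeries B) a = HahnSeries.C (algebraMap K B a) := by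
  rw [HahnSeries.algebraMap_apply', PowerSeries.algebraMap_apply, HahnSeries.ofPowerSeries_C]

/-- The `K`-algebra homomorphism `B((s)) → B'((s))` that applies `φ` to every coefficient. -/
noncomputable def laurentMapAlgHom {B' : Type*} [CommRing B'] [Algebra K B'] (φ : B →ₐ[K] B') :
    LaurentSeries B →ₐ[K] LaurentSeries B' where
  toFun f := f.map (φ : B →+* B')
  map_one' := HahnSeries.map_one (φ : B →+* B').toMonoidWithZeroHom
  map_zero' := HahnSeries.map_zero (φ : ZeroHom B B')
  map_add' _ _ := HahnSeries.map_add (φ : B →+ B')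
  map_mul' _ _ := HahnSeries.map_mul (φ : B →ₙ+* B')
  commutes' a := by
    rw [laurentSeries_algebraMap_eq_C, laurentSeries_algebraMap_eq_C, HahnSeries.map_C,
      AlgHom.coe_toRingHom, φ.commutes]

lemma mem_ker_laurentMapAlgHom_mkₐ {J : Ideal B} {f : LaurentSeries B} :
    f ∈ RingHom.ker (laurentMapAlgHom (Ideal.Quotient.mkₐ K J)) ↔ ∀ e, f.coeff e ∈ J := by
  rw [RingHom.mem_ker, HahnSeries.ext_iff, funext_iff]
  exact forall_congr' fun _ => Ideal.Quotient.eq_zero_iff_mem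

section Derivative

variable (K)

lemma coeff_laurentDerivative (f : LaurentSeries B) (e : ℤ) :
    (LaurentSeries.derivative K f).coeff e = (e + 1) • f.coeff (e + 1) := by
  rw [LaurentSeries.derivative_apply, LaurentSeries.hasseDeriv_coeff, Nat.cast_one,
    Ring.choose_one_right]

lemma coeff_single_one_mul_laurentDerivative (f : LaurentSeries B) (e : ℤ) :
    (HahnSeries.single 1 1 * LaurentSeries.derivative K f).coeff e = e • f.coeff e := by
  rw [HahnSeries.coeff_single_mul, one_mul, coeff_laurentDerivative, sub_add_cancel]

lemma support_single_one_mul_laurentDerivative_subset (f : LaurentSeries B) :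
    (HahnSeries.single 1 1 * LaurentSeries.derivative K f).support ⊆ f.support := by
  intro e he hf
  exact he (by rw [coeff_single_one_mul_laurentDerivative, hf, smul_zero])

lemma single_one_mul_laurentDerivative_mul (f g : LaurentSeries B) :
    HahnSeries.single 1 1 * LaurentSeries.derivative K (f * g) =
      f * (HahnSeries.single 1 1 * LaurentSeries.derivative K g) +
        HahnSeries.single 1 1 * LaurentSeries.derivative K f * g := by
  ext e
  rw [HahnSeries.coeff_add, coeff_single_one_mul_laurentDerivative, HahnSeries.coeff_mul,
    HahnSeries.coeff_mul_left' f.isPWO_support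
      (support_single_one_mul_laurentDerivative_subset K f),
    HahnSeries.coeff_mul_right' g.isPWO_support
      (support_single_one_mul_laurentDerivative_subset K g),
    Finset.smul_sum, ← Finset.sum_add_distrib]
  refine Finset.sum_congr rfl fun ij hij => ?_
  obtain ⟨-, -, rfl⟩ := Finset.mem_antidiagonal.mp hij
  rw [coeff_single_one_mul_laurentDerivative, coeff_single_one_mul_laurentDerivative, add_smul,
    smul_mul_assoc, mul_smul_comm, add_comm]

/- The Euler operator `s d/ds` scales the coefficient of `s^e` by `e`, which is additive along the
convolution; the unit `s` is then cancelled. -/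
lemma laurentDerivative_mul (f g : LaurentSeries B) :
    LaurentSeries.derivative K (f * g) =
      f * LaurentSeries.derivative K g + g * LaurentSeries.derivative K f := by
  have s_isUnit : IsUnit (HahnSeries.single 1 1 : LaurentSeries B) :=
    .of_mul_eq_one (HahnSeries.single (-1) 1) (by
      rw [HahnSeries.single_mul_single, add_neg_cancel, one_mul, HahnSeries.single_zero_one])
  apply s_isUnit.mul_left_cancel
  rw [single_one_mul_laurentDerivative_mul]
  ring

lemma laurentDerivative_algebraMap (a : K) :
    LaurentSeries.derivative K (algebraMap K (LaurentSeries B) a) = 0 := by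
  ext e
  rw [coeff_laurentDerivative, laurentSeries_algebraMap_eq_C, HahnSeries.C_apply,
    HahnSeries.coeff_single]
  split_ifs with he <;> simp [he]

lemma laurentDerivative_mem_ker {J : Ideal B} {f : LaurentSeries B}
    (hf : f ∈ RingHom.ker (laurentMapAlgHom (Ideal.Quotient.mkₐ K J))) :
    LaurentSeries.derivative K f ∈ RingHom.ker (laurentMapAlgHom (Ideal.Quotient.mkₐ K J)) := by
  rw [mem_ker_laurentMapAlgHom_mkₐ] at hf ⊢
  intro e
  rw [coeff_laurentDerivative]
  exact zsmul_mem (hf _) _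

variable (B) in
/-- Formal differentiation `d/ds`, bundled as a derivation of `B((s))` over `K`. The module
structure is spelled out because instance search finds the coefficientwise one, which agrees with
that of the algebra `B((s))` only propositionally. -/
noncomputable def laurentDerivation :
    @Derivation K (LaurentSeries B) (LaurentSeries B) _ _ _ _ _ Algebra.toModule :=
  derivationOfLeibniz (LaurentSeries.derivative K).toAddMonoidHom
    (laurentDerivative_mul K) (laurentDerivative_algebraMap K)

end Derivative

end LaurentSeries

lemma succ_mul_inv_factorial_mul_prod {K : Type*} [Field K] [CharZero K] (m x : K) (ℓ : ℕ) :
    ((ℓ : K) + 1) * (((ℓ + 1).factorial : K)⁻¹ *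
        ∏ j ∈ Finset.range (ℓ + 1), ((x + (j + 1) * m) / m)) =
      (x + m) / m * ((ℓ.factorial : K)⁻¹ *
        ∏ j ∈ Finset.range ℓ, ((x + m + (j + 1) * m) / m)) := by
  have hℓ : (ℓ : K) + 1 ≠ 0 := Nat.cast_add_one_ne_zero ℓ
  have hshift : ∏ j ∈ Finset.range ℓ, ((x + (((j + 1 : ℕ) : K) + 1) * m) / m) =
      ∏ j ∈ Finset.range ℓ, ((x + m + (j + 1) * m) / m) :=
    Finset.prod_congr rfl fun j _ => by push_cast; ring
  rw [Finset.prod_range_succ', hshift, Nat.factorial_succ, Nat.cast_zero, zero_add, one_mul]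
  push_cast
  rw [mul_inv, ← mul_assoc, mul_inv_cancel_left₀ hℓ]
  ring

lemma succ_mul_eq_single_mul_derivative {K B : Type*} [Field K] [CharZero K] [CommRing B]
    [Algebra K B] {m : ℕ} {Y : ℕ → LaurentSeries B} {y : ℤ → B}
    (hY : ∀ (ℓ : ℕ) (e : ℤ), (Y ℓ).coeff e =
      ((ℓ.factorial : K)⁻¹ * ∏ j ∈ Finset.range ℓ, (((e : K) + (j + 1) * m) / m)) •
        y (e + ℓ * m)) (ℓ : ℕ) :
    ((ℓ : LaurentSeries B) + 1) * Y (ℓ + 1) =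
      HahnSeries.single (1 - (m : ℤ)) (algebraMap K B (m : K)⁻¹) *
        LaurentSeries.derivative K (Y ℓ) := by
  ext e
  have hindex : e + ((ℓ + 1 : ℕ) : ℤ) * m = e + m + ℓ * m := by push_cast; ring
  have hshift : e - (1 - (m : ℤ)) + 1 = e + m := by ring
  calc (((ℓ : LaurentSeries B) + 1) * Y (ℓ + 1)).coeff e
      = ((ℓ : K) + 1) • (Y (ℓ + 1)).coeff e := by
        rw [← Nat.cast_succ, ← nsmul_eq_mul, HahnSeries.coeff_smul, ← Nat.cast_succ,
          Nat.cast_smul_eq_nsmul]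
    _ = (((e : K) + m) / m) • (Y ℓ).coeff (e + m) := by
        rw [hY, hY, smul_smul, smul_smul, succ_mul_inv_factorial_mul_prod, hindex]
        push_cast
        rfl
    _ = (HahnSeries.single (1 - (m : ℤ)) (algebraMap K B (m : K)⁻¹) *
          LaurentSeries.derivative K (Y ℓ)).coeff e := by
        rw [HahnSeries.coeff_single_mul, coeff_laurentDerivative, hshift, ← Algebra.smul_def,
          ← Int.cast_smul_eq_zsmul K, smul_smul, div_eq_inv_mul]
        push_cast
        rfl

/-- The coordinate `y_{i,e}` of `B_α`, extended by zero to all integers `e`. -/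
noncomputable def twistedCoord {k m : ℕ} (α : Fin k → ℕ) (i : Fin k) (e : ℤ) :
    MvPolynomial (TwIdx k m α) ℂ :=
  if h : 0 ≤ e ∧ e.toNat % m = α i then X ⟨(i, e.toNat), h.2⟩ else 0

theorem twisted_field_descends_to_quotients_general
    {K B σ κ : Type*} [CommRing K] [CommRing B] [Algebra K B] (v : LaurentSeries B)
    (T : Derivation K (MvPolynomial (σ × ℕ) K) (MvPolynomial (σ × ℕ) K))
    (hT : ∀ (i : σ) (ℓ : ℕ), T (X (i, ℓ)) = ((ℓ : K) + 1) • X (i, ℓ + 1))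
    (P : κ → MvPolynomial (σ × ℕ) K)
    (Iinf : Ideal (MvPolynomial (σ × ℕ) K))
    (hIinf : Iinf = Ideal.span {q | ∃ (j : κ) (n : ℕ), q = (⇑T)^[n] (P j)})
    (Φ : MvPolynomial (σ × ℕ) K →ₐ[K] LaurentSeries B)
    (hΦ : ∀ (i : σ) (ℓ : ℕ),
      ((ℓ : LaurentSeries B) + 1) * Φ (X (i, ℓ + 1)) =
        v * LaurentSeries.derivative K (Φ (X (i, ℓ))))
    (J : Ideal B)
    (hJ : J = Ideal.span {c | ∃ (j : κ) (e : ℤ), c = (Φ (P j)).coeff e}) :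
    (∀ p ∈ Iinf, ∀ e : ℤ, (Φ p).coeff e ∈ J) ∧
    (∃ Φbar : (MvPolynomial (σ × ℕ) K ⧸ Iinf) →ₐ[K] LaurentSeries (B ⧸ J),
      ∀ (p : MvPolynomial (σ × ℕ) K) (e : ℤ),
        (Φbar (Ideal.Quotient.mk Iinf p)).coeff e = Ideal.Quotient.mk J ((Φ p).coeff e)) := by
  let reduce := laurentMapAlgHom (Ideal.Quotient.mkₐ K J)
  let D := v • laurentDerivation K B
  have hsemiconj : Function.Semiconj Φ T D := by
    refine semiconj_derivation_of_X fun ⟨i, ℓ⟩ => ?_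
    rw [hT, Algebra.smul_def, map_mul, Φ.commutes, map_add, map_natCast, map_one]
    exact hΦ i ℓ
  have hstable : Set.MapsTo D (RingHom.ker reduce) (RingHom.ker reduce) :=
    fun _ hf => Ideal.mul_mem_left _ v (laurentDerivative_mem_ker K hf)
  have hgen : ∀ j, Φ (P j) ∈ RingHom.ker reduce := fun j =>
    mem_ker_laurentMapAlgHom_mkₐ.2 fun e => hJ ▸ Ideal.subset_span ⟨j, e, rfl⟩
  have hle : Iinf ≤ (RingHom.ker reduce).comap (Φ : MvPolynomial (σ × ℕ) K →+* LaurentSeries B) :=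
    hIinf.trans_le (span_iterate_le_comap hsemiconj hstable hgen)
  exact ⟨fun p hp => mem_ker_laurentMapAlgHom_mkₐ.1 (hle hp),
    Ideal.Quotient.liftₐ Iinf (reduce.comp Φ) fun _ ha => hle ha, fun _ _ => rfl⟩

/-- for every `p ∈ I_∞` and every `e ∈ ℤ`, the coefficient of `s^e`
in `Φ(p)` lies in the ideal `J ⊆ B_α`; consequently `Φ` descends to a ℂ-algebra
homomorphism `A_∞ = R_k/I_∞ → (B_α/J)((s))`, i.e. the twisted fields are well
defined on the quotients `ℂ[JZ]` and `ℂ[J^g Z]`. -/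
theorem twisted_field_descends_to_quotients
    (k r m : ℕ) (hk : 1 ≤ k) (hm : 1 ≤ m)
    (α : Fin k → ℕ) (hα : ∀ i, α i < m)
    (T : Derivation ℂ (MvPolynomial (Fin k × ℕ) ℂ) (MvPolynomial (Fin k × ℕ) ℂ))
    (hT : ∀ (i : Fin k) (ℓ : ℕ),
      T (X (i, ℓ)) = ((ℓ : ℂ) + 1) • X (i, ℓ + 1))
    (ι : MvPolynomial (Fin k) ℂ →ₐ[ℂ] MvPolynomial (Fin k × ℕ) ℂ)
    (hι : ∀ i : Fin k, ι (X i) = X (i, 0))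
    (P : Fin r → MvPolynomial (Fin k) ℂ)
    (Iinf : Ideal (MvPolynomial (Fin k × ℕ) ℂ))
    (hIinf : Iinf = Ideal.span {q | ∃ (j : Fin r) (n : ℕ), q = (⇑T)^[n] (ι (P j))})
    (Φ : MvPolynomial (Fin k × ℕ) ℂ →ₐ[ℂ] LaurentSeries (MvPolynomial (TwIdx k m α) ℂ))
    (hΦ : ∀ (i : Fin k) (ℓ : ℕ) (e : ℤ),
      (Φ (X (i, ℓ))).coeff e =
        if h : 0 ≤ e + ℓ * m ∧ (e + ℓ * m).toNat % m = α i then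
          (((ℓ.factorial : ℂ))⁻¹ *
            ∏ j ∈ Finset.range ℓ, (((e : ℂ) + (j + 1) * m) / m)) •
            X (⟨(i, (e + ℓ * m).toNat), h.2⟩ : TwIdx k m α)
        else 0)
    (J : Ideal (MvPolynomial (TwIdx k m α) ℂ))
    (hJ : J = Ideal.span {c | ∃ (j : Fin r) (e : ℤ), c = (Φ (ι (P j))).coeff e}) :
    (∀ p ∈ Iinf, ∀ e : ℤ, (Φ p).coeff e ∈ J) ∧
    (∃ Φbar : (MvPolynomial (Fin k × ℕ) ℂ ⧸ Iinf) →ₐ[ℂ]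
        LaurentSeries (MvPolynomial (TwIdx k m α) ℂ ⧸ J),
      ∀ (p : MvPolynomial (Fin k × ℕ) ℂ) (e : ℤ),
        (Φbar (Ideal.Quotient.mk Iinf p)).coeff e
          = Ideal.Quotient.mk J ((Φ p).coeff e)) := by
  have hrec (i : Fin k) := succ_mul_eq_single_mul_derivative (K := ℂ) (m := m)
    (Y := fun ℓ => Φ (X (i, ℓ))) (y := twistedCoord α i)
    fun ℓ e => by simp only [hΦ, twistedCoord, smul_dite, smul_zero]
  exact twisted_field_descends_to_quotients_general _ T hT (fun j => ι (P j)) Iinf hIinf Φ hrec J hJ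
end

section
/- With notation as in the context, for each p ∈ ℕ let L_p be the unique ℂ-linear derivation of R_k with L_p(x_{i,ℓ}) = (ℓ−p)·x_{i,ℓ−p} if ℓ ≥ p and L_p(x_{i,ℓ}) = 0 if ℓ < p. Then L_p(I_∞) ⊆ I_∞ for every p ∈ ℕ; consequently each L_p induces a derivation of A_∞ = ℂ[JZ] (the infinitesimal action of the group Aut 𝒪 of formal coordinate changes on the jet scheme JZ). -/
open MvPolynomial

/-!
In terms of the arcs `x i (t) = ∑ ℓ, x_{i,ℓ} t ^ ℓ`, the operators act by `T x = ∂ₜ x` and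
`L_p x = t ^ (p + 1) ∂ₜ x`. So `T` is `L_{-1}`, and the Witt relation gives
`L_p T = T L_p + (p + 1) L_{p-1}`. As `L_p` kills the variables `x_{i,0}` for `p ≥ 0`, it kills the
equations `P_j`, and pushing `L_p` to the right through `T ^ n P_j` stays in the jet ideal.
-/

open Set

section DifferentialSpan

variable {R A κ : Type*} [CommSemiring R] [CommSemiring A] [Algebra R A]

theorem derivation_mapsTo_span (D : Derivation R A A) {S : Set A} (h : MapsTo D S (Ideal.span S)) :
    MapsTo D (Ideal.span S) (Ideal.span S) := by
  intro q hq
  induction hq using Submodule.span_induction with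
  | mem x hx => exact h hx
  | zero => simp
  | add x y _ _ hx hy =>
    rw [D.map_add]
    exact add_mem hx hy
  | smul a x hxS hx =>
    rw [smul_eq_mul, D.leibniz]
    exact add_mem (Ideal.mul_mem_left _ a hx) (Ideal.mul_mem_right _ _ hxS)

/-- The differential ideal generated by a family `f` under a derivation `T`: the ideal generated by
all iterated derivatives of the `f j`. For `T = ∂ₜ` on a jet algebra this is the jet ideal of the
equations `f j`. -/
def differentialSpan (T : Derivation R A A) (f : κ → A) : Ideal A :=
  Ideal.span {q | ∃ (j : κ) (n : ℕ), q = T^[n] (f j)}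

theorem iterate_mem_differentialSpan (T : Derivation R A A) (f : κ → A) (n : ℕ) (j : κ) :
    T^[n] (f j) ∈ differentialSpan T f :=
  Ideal.subset_span ⟨j, n, rfl⟩

theorem mapsTo_differentialSpan_of_iterate_mem {T D : Derivation R A A} {f : κ → A}
    (h : ∀ n j, D (T^[n] (f j)) ∈ differentialSpan T f) :
    MapsTo D (differentialSpan T f) (differentialSpan T f) := by
  refine derivation_mapsTo_span D ?_
  rintro _ ⟨j, n, rfl⟩
  exact h n j

theorem mapsTo_differentialSpan_self (T : Derivation R A A) (f : κ → A) :
    MapsTo T (differentialSpan T f) (differentialSpan T f) := by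
  refine mapsTo_differentialSpan_of_iterate_mem fun n j ↦ ?_
  rw [← Function.iterate_succ_apply' T]
  exact iterate_mem_differentialSpan T f (n + 1) j

end DifferentialSpan

section CommRing

variable {R A : Type*} [CommRing R] [CommRing A] [Algebra R A]

theorem mapsTo_differentialSpan_of_lie_eq_smul {κ : Type*} (D : ℕ → Derivation R A A)
    (c : ℕ → A) (f : κ → A)
    (hlie : ∀ m, ⁅D (m + 1), D 0⁆ = c m • D m)
    (hf : ∀ m j, D (m + 1) (f j) ∈ differentialSpan (D 0) f) (m : ℕ) :
    MapsTo (D m) (differentialSpan (D 0) f) (differentialSpan (D 0) f) := by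
  induction m with
  | zero => exact mapsTo_differentialSpan_self (D 0) f
  | succ m ihm =>
    refine mapsTo_differentialSpan_of_iterate_mem fun n j ↦ ?_
    induction n with
    | zero => exact hf m j
    | succ n ihn =>
      set g := (D 0)^[n] (f j)
      have hswap : D (m + 1) (D 0 g) = c m * D m g + D 0 (D (m + 1) g) := by
        rw [← sub_eq_iff_eq_add, ← Derivation.commutator_apply, hlie, Derivation.smul_apply,
          smul_eq_mul]
      rw [Function.iterate_succ_apply', hswap]
      exact add_mem
        (Ideal.mul_mem_left _ _ (ihm (iterate_mem_differentialSpan (D 0) f n j)))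
        (mapsTo_differentialSpan_self (D 0) f ihn)

theorem exists_derivation_quotient_of_mapsTo
    {I : Ideal A} {D : Derivation R A A} (h : MapsTo D I I) :
    ∃ D' : Derivation R (A ⧸ I) (A ⧸ I),
      ∀ a, D' (Ideal.Quotient.mk I a) = Ideal.Quotient.mk I (D a) := by
  have hker : ∀ a, Ideal.Quotient.mkₐ R I a = 0 → Ideal.Quotient.mkₐ R I (D a) = 0 := fun a ha ↦
    Ideal.Quotient.eq_zero_iff_mem.2 (h (Ideal.Quotient.eq_zero_iff_mem.1 ha))
  exact ⟨Derivation.liftOfSurjective (Ideal.Quotient.mkₐ_surjective R I) hker,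
    Derivation.liftOfSurjective_apply (Ideal.Quotient.mkₐ_surjective R I) hker⟩

end CommRing

section WittDerivation

variable (R σ : Type*)

/-- The vector field `t ^ m ∂ₜ` acting on the jet algebra: it sends `x_{i,ℓ}`, the coefficient of
`t ^ ℓ` in `x i (t)`, to the coefficient of `t ^ ℓ` in `t ^ m ∂ₜ (x i (t))`. Hence `T` is
`wittDerivation R σ 0` and `L_p` is `wittDerivation R σ (p + 1)`. For `ℓ + 1 ≤ m` the truncated
subtraction makes the coefficient zero. -/
noncomputable def wittDerivation [CommSemiring R] (m : ℕ) :
    Derivation R (MvPolynomial (σ × ℕ) R) (MvPolynomial (σ × ℕ) R) :=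
  mkDerivation R fun x ↦ ((x.2 + 1 - m : ℕ) : R) • X (x.1, x.2 + 1 - m)

theorem wittDerivation_X [CommSemiring R] (m : ℕ) (i : σ) (ℓ : ℕ) :
    wittDerivation R σ m (X (i, ℓ)) = ((ℓ + 1 - m : ℕ) : R) • X (i, ℓ + 1 - m) :=
  mkDerivation_X R _ _

theorem wittDerivation_wittDerivation_X [CommSemiring R] (m n : ℕ) (i : σ) (ℓ : ℕ) :
    wittDerivation R σ m (wittDerivation R σ n (X (i, ℓ))) =
      (((ℓ + 1 - n : ℕ) : R) * ((ℓ + 2 - (m + n) : ℕ) : R)) • X (i, ℓ + 2 - (m + n)) := by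
  rw [wittDerivation_X, Derivation.map_smul, wittDerivation_X, smul_smul]
  obtain hn | hn := le_or_gt n (ℓ + 1)
  · rw [show ℓ + 1 - n + 1 - m = ℓ + 2 - (m + n) by lia]
  · simp [Nat.sub_eq_zero_of_le hn.le]

theorem lie_wittDerivation_succ [CommRing R] (m n : ℕ) :
    ⁅wittDerivation R σ (m + 1), wittDerivation R σ n⁆ =
      ((m : R) + 1 - n) • wittDerivation R σ (m + n) := by
  refine derivation_ext fun ⟨i, ℓ⟩ ↦ ?_
  have hindex : ℓ + 2 - (m + 1 + n) = ℓ + 1 - (m + n) := by lia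
  rw [Derivation.commutator_apply, Derivation.smul_apply, wittDerivation_wittDerivation_X,
    wittDerivation_wittDerivation_X, wittDerivation_X, Nat.add_comm n (m + 1), hindex, ← sub_smul,
    ← sub_mul, smul_smul]
  obtain hℓ | hℓ := le_or_gt (ℓ + 1) (m + n)
  · simp [Nat.sub_eq_zero_of_le hℓ]
  · rw [Nat.cast_sub (show n ≤ ℓ + 1 by lia), Nat.cast_sub (show m + 1 ≤ ℓ + 1 by lia)]
    push_cast
    ring_nf

theorem wittDerivation_succ_rename_zero [CommSemiring R] (m : ℕ) (f : MvPolynomial σ R) :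
    wittDerivation R σ (m + 1) (rename (·, 0) f) = 0 := by
  refine derivation_eq_zero_of_forall_mem_vars fun x hx ↦ ?_
  obtain ⟨i, -, rfl⟩ := mem_vars_rename _ f hx
  simp [wittDerivation_X]

theorem mapsTo_wittDerivation_differentialSpan [CommRing R] {κ : Type*}
    (P : κ → MvPolynomial σ R) (m : ℕ) :
    MapsTo (wittDerivation R σ m)
      (differentialSpan (wittDerivation R σ 0) fun j ↦ rename (·, 0) (P j))
      (differentialSpan (wittDerivation R σ 0) fun j ↦ rename (·, 0) (P j)) := by
  refine mapsTo_differentialSpan_of_lie_eq_smul (wittDerivation R σ) (fun m ↦ C (m + 1)) _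
    (fun m ↦ ?_) (fun m j ↦ ?_) m
  · rw [lie_wittDerivation_succ, ← algebraMap_eq, algebraMap_smul]
    simp
  · rw [wittDerivation_succ_rename_zero]
    exact zero_mem _

end WittDerivation

theorem witt_action_preserves_jet_ideal_general {R σ κ : Type*} [CommRing R]
    (T : Derivation R (MvPolynomial (σ × ℕ) R) (MvPolynomial (σ × ℕ) R))
    (hT : ∀ (i : σ) (ℓ : ℕ), T (X (i, ℓ)) = ((ℓ : R) + 1) • X (i, ℓ + 1))
    (ι : MvPolynomial σ R →ₐ[R] MvPolynomial (σ × ℕ) R)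
    (hι : ∀ i : σ, ι (X i) = X (i, 0))
    (P : κ → MvPolynomial σ R)
    (Iinf : Ideal (MvPolynomial (σ × ℕ) R))
    (hIinf : Iinf = Ideal.span {q | ∃ (j : κ) (n : ℕ), q = (⇑T)^[n] (ι (P j))})
    (L : ℕ → Derivation R (MvPolynomial (σ × ℕ) R) (MvPolynomial (σ × ℕ) R))
    (hL : ∀ (p : ℕ) (i : σ) (ℓ : ℕ),
      L p (X (i, ℓ)) = if p ≤ ℓ then ((ℓ - p : ℕ) : R) • X (i, ℓ - p) else 0) :
    (∀ p : ℕ, ∀ q ∈ Iinf, L p q ∈ Iinf) ∧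
    (∀ p : ℕ, ∃ D : Derivation R (MvPolynomial (σ × ℕ) R ⧸ Iinf) (MvPolynomial (σ × ℕ) R ⧸ Iinf),
      ∀ q : MvPolynomial (σ × ℕ) R,
        D (Ideal.Quotient.mk Iinf q) = Ideal.Quotient.mk Iinf (L p q)) := by
  obtain rfl : T = wittDerivation R σ 0 :=
    derivation_ext fun ⟨i, ℓ⟩ ↦ by simp [hT, wittDerivation_X]
  obtain rfl : ι = rename (·, 0) := algHom_ext fun i ↦ by rw [hι, rename_X]
  obtain rfl : L = fun p ↦ wittDerivation R σ (p + 1) := by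
    refine funext fun p ↦ derivation_ext fun ⟨i, ℓ⟩ ↦ ?_
    rw [hL, wittDerivation_X, Nat.add_sub_add_right]
    split_ifs with h
    · rfl
    · simp [Nat.sub_eq_zero_of_le (Nat.le_of_not_le h)]
  have hmaps (p : ℕ) : MapsTo (wittDerivation R σ (p + 1)) Iinf Iinf := by
    subst hIinf
    exact mapsTo_wittDerivation_differentialSpan R σ P (p + 1)
  exact ⟨hmaps, fun p ↦ exists_derivation_quotient_of_mapsTo (hmaps p)⟩

/-- each derivation `L_p` (with `L_p(x_{i,ℓ}) = (ℓ−p)·x_{i,ℓ−p}`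
for `ℓ ≥ p`, and `0` otherwise) preserves the jet ideal: `L_p(I_∞) ⊆ I_∞`;
consequently each `L_p` induces a derivation of `A_∞ = ℂ[JZ]` (the
infinitesimal action of `Aut 𝒪` on the jet scheme). -/
theorem witt_action_preserves_jet_ideal
    (k r : ℕ) (hk : 1 ≤ k)
    (T : Derivation ℂ (MvPolynomial (Fin k × ℕ) ℂ) (MvPolynomial (Fin k × ℕ) ℂ))
    (hT : ∀ (i : Fin k) (ℓ : ℕ),
      T (X (i, ℓ)) = ((ℓ : ℂ) + 1) • X (i, ℓ + 1))
    (ι : MvPolynomial (Fin k) ℂ →ₐ[ℂ] MvPolynomial (Fin k × ℕ) ℂ)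
    (hι : ∀ i : Fin k, ι (X i) = X (i, 0))
    (P : Fin r → MvPolynomial (Fin k) ℂ)
    (Iinf : Ideal (MvPolynomial (Fin k × ℕ) ℂ))
    (hIinf : Iinf = Ideal.span {q | ∃ (j : Fin r) (n : ℕ), q = (⇑T)^[n] (ι (P j))})
    (L : ℕ → Derivation ℂ (MvPolynomial (Fin k × ℕ) ℂ) (MvPolynomial (Fin k × ℕ) ℂ))
    (hL : ∀ (p : ℕ) (i : Fin k) (ℓ : ℕ),
      L p (X (i, ℓ)) =
        if p ≤ ℓ then (((ℓ - p : ℕ)) : ℂ) • X (i, ℓ - p) else 0) :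
    (∀ p : ℕ, ∀ q ∈ Iinf, L p q ∈ Iinf) ∧
    (∀ p : ℕ, ∃ D : Derivation ℂ (MvPolynomial (Fin k × ℕ) ℂ ⧸ Iinf)
        (MvPolynomial (Fin k × ℕ) ℂ ⧸ Iinf),
      ∀ q : MvPolynomial (Fin k × ℕ) ℂ,
        D (Ideal.Quotient.mk Iinf q) = Ideal.Quotient.mk Iinf (L p q)) :=
  witt_action_preserves_jet_ideal_general T hT ι hι P Iinf hIinf L hL
end
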